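/- Let 0 < γ < 1/4 and −1 + 1/√2 < β < 0. Define the modified squared loss φ(α) := 1 for α ≤ 0, φ(α) := (1 − α)² for 0 < α ≤ 1, and φ(α) := 0 for α > 1, and its shift φ_β(α) := φ(α − β). Then φ_β is (φ_γ, [−1, 1])-calibrated, even though φ_β is not quasiconcave even. -/

import Mathlib

/-- Class-conditional risk of a margin-based loss `φ`:
`C_φ(α, η) = η φ(α) + (1 - η) φ(-α)`. -/
noncomputable def ccr (φ : ℝ → ℝ) (α η : ℝ) : ℝ := η * φ α + (1 - η) * φ (-α)

/-- Minimal class-conditional risk over a set `A` of achievable prediction values. -/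
noncomputable def ccrStar (φ : ℝ → ℝ) (A : Set ℝ) (η : ℝ) : ℝ :=
  sInf ((fun α => ccr φ α η) '' A)

/-- Excess class-conditional risk. -/
noncomputable def ccrExcess (φ : ℝ → ℝ) (A : Set ℝ) (α η : ℝ) : ℝ :=
  ccr φ α η - ccrStar φ A η

/-- `φ` is `(ψ, A)`-calibrated. -/
def Calibrated (φ ψ : ℝ → ℝ) (A : Set ℝ) : Prop :=
  ∀ ε > (0:ℝ), ∃ δ > (0:ℝ), ∀ η ∈ Set.Icc (0:ℝ) 1, ∀ α ∈ A,
    ccr φ α η < ccrStar φ A η + δ → ccr ψ α η < ccrStar ψ A η + ε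

/-- The `γ`-robust 0-1 loss `φ_γ(α) = 1{α ≤ γ}` (the 0-1 loss is the case `γ = 0`). -/
noncomputable def robustLoss (γ : ℝ) (α : ℝ) : ℝ := if α ≤ γ then 1 else 0

/-- Quasiconcavity of a real function on ℝ. -/
def QuasiconcaveFn (h : ℝ → ℝ) : Prop :=
  ∀ α₁ α₂ l : ℝ, 0 ≤ l → l ≤ 1 → min (h α₁) (h α₂) ≤ h (l * α₁ + (1 - l) * α₂)

/-- `φ` is quasiconcave even if its even part `α ↦ φ(α) + φ(-α)` is quasiconcave. -/
def QuasiconcaveEven (φ : ℝ → ℝ) : Prop := QuasiconcaveFn (fun α => φ α + φ (-α))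

/-- The modified squared loss: `1` for `α ≤ 0`, `(1-α)²` for `0 < α ≤ 1`, `0` for `α > 1`. -/
noncomputable def modSq (α : ℝ) : ℝ := if α ≤ 0 then 1 else if α ≤ 1 then (1 - α)^2 else 0

/-!
On `|α| ≤ -β` both arguments `±α - β` are nonnegative, where the modified squared loss is convex,
so the even part of `φ_β` is at least `2 φ(-β) = 2 (1 + β)²`; elsewhere it is `1 + φ(|α| - β)`.
The lower bound on `β` is exactly what makes `2 (1 + β)² > 1`, so the even part is at least `1`
everywhere and at least `1 + m` on `[-γ, γ]` for some `m > 0`.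

By symmetry let `η ≥ 1/2`. The loss `φ_β` vanishes at `1 + β`, so the minimal risk is at most
`1 - η`, and `C(α, η) = (1 - η) + (2 η - 1) φ_β(α) + (1 - η) (φ_β(α) + φ_β(-α) - 1)`. For `|α| ≤ γ`
this exceeds `1 - η` by at least `m / 2`. For `α < -γ`, `C(α, η)` is at least `1/2`, so an almost
minimal risk forces `2 η - 1`, the excess robust risk, to be small.

Quasiconcavity of the even part would make it maximal at `0`, but `2 φ(-β) < φ(0) + φ(-2β)` says
that it is larger at `β`.
-/

lemma ccr_neg_one_sub (φ : ℝ → ℝ) (α η : ℝ) : ccr φ (-α) (1 - η) = ccr φ α η := by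
  simp only [ccr, neg_neg, sub_sub_cancel]
  ring

lemma ccr_eq_one_sub_add (φ : ℝ → ℝ) (α η : ℝ) :
    ccr φ α η = 1 - η + (2 * η - 1) * φ α + (1 - η) * (φ α + φ (-α) - 1) := by
  rw [ccr]
  ring

lemma ccrStar_le_ccr {φ : ℝ → ℝ} (hφ : ∀ x, 0 ≤ φ x) {A : Set ℝ} {α η : ℝ} (hα : α ∈ A)
    (hη : η ∈ Set.Icc (0 : ℝ) 1) : ccrStar φ A η ≤ ccr φ α η := by
  refine csInf_le ⟨0, ?_⟩ ⟨α, hα, rfl⟩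
  rintro _ ⟨x, -, rfl⟩
  exact add_nonneg (mul_nonneg hη.1 (hφ x)) (mul_nonneg (sub_nonneg.2 hη.2) (hφ (-x)))

lemma ccrStar_le_min {φ : ℝ → ℝ} (hφ : ∀ x, φ x ∈ Set.Icc (0 : ℝ) 1) {A : Set ℝ} {a η : ℝ}
    (ha : a ∈ A) (hna : -a ∈ A) (hφa : φ a = 0) (hη : η ∈ Set.Icc (0 : ℝ) 1) :
    ccrStar φ A η ≤ min η (1 - η) := by
  have hφ₀ (x : ℝ) : 0 ≤ φ x := (hφ x).1
  have h_pos : ccr φ a η ≤ 1 - η := by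
    simpa only [ccr, hφa, mul_zero, zero_add] using
      mul_le_of_le_one_right (sub_nonneg.2 hη.2) (hφ (-a)).2
  have h_neg : ccr φ (-a) η ≤ η := by
    simpa only [ccr, neg_neg, hφa, mul_zero, add_zero] using
      mul_le_of_le_one_right hη.1 (hφ (-a)).2
  exact le_min ((ccrStar_le_ccr hφ₀ hna hη).trans h_neg) ((ccrStar_le_ccr hφ₀ ha hη).trans h_pos)

lemma ccr_robustLoss_of_lt {γ α : ℝ} (hγ : 0 ≤ γ) (hα : γ < α) (η : ℝ) :
    ccr (robustLoss γ) α η = 1 - η := by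
  simp only [ccr, robustLoss, if_neg hα.not_ge, if_pos (show -α ≤ γ by linarith), mul_zero,
    mul_one, zero_add]

lemma ccr_robustLoss_of_lt_neg {γ α : ℝ} (hγ : 0 ≤ γ) (hα : α < -γ) (η : ℝ) :
    ccr (robustLoss γ) α η = η := by
  rw [← ccr_neg_one_sub, ccr_robustLoss_of_lt hγ (lt_neg_of_lt_neg hα), sub_sub_cancel]

lemma ccr_robustLoss_of_abs_le {γ α : ℝ} (hα : |α| ≤ γ) (η : ℝ) :
    ccr (robustLoss γ) α η = 1 := by
  simp only [ccr, robustLoss, if_pos ((le_abs_self α).trans hα),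
    if_pos ((neg_le_abs α).trans hα), mul_one, add_sub_cancel]

lemma min_le_ccrStar_robustLoss {γ : ℝ} (hγ : 0 ≤ γ) {A : Set ℝ} (hA : A.Nonempty) {η : ℝ}
    (hη : η ∈ Set.Icc (0 : ℝ) 1) : min η (1 - η) ≤ ccrStar (robustLoss γ) A η := by
  refine le_csInf (hA.image _) ?_
  rintro _ ⟨α, -, rfl⟩
  rcases le_or_gt |α| γ with hα | hα
  · exact (min_le_left _ _).trans (hη.2.trans_eq (ccr_robustLoss_of_abs_le hα η).symm)
  rcases lt_abs.1 hα with hα | hα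
  · exact (min_le_right _ _).trans_eq (ccr_robustLoss_of_lt hγ hα η).symm
  · exact (min_le_left _ _).trans_eq (ccr_robustLoss_of_lt_neg hγ (lt_neg_of_lt_neg hα) η).symm

lemma half_le_ccr {φ : ℝ → ℝ} {α η : ℝ} (hη : 1 / 2 ≤ η) (hle : φ (-α) ≤ φ α)
    (heven : 1 ≤ φ α + φ (-α)) : 1 / 2 ≤ ccr φ α η := by
  rw [ccr]
  nlinarith [mul_nonneg (sub_nonneg.2 hη) (sub_nonneg.2 hle)]

lemma one_sub_add_half_le_ccr {φ : ℝ → ℝ} {α η m : ℝ} (hη : η ∈ Set.Icc (1 / 2 : ℝ) 1)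
    (hm : 0 ≤ m) (hφ : φ (-α) ≤ 1) (heven : 1 + m ≤ φ α + φ (-α)) :
    1 - η + m / 2 ≤ ccr φ α η := by
  have hφm : m ≤ φ α := by linarith
  have h2η : 0 ≤ 2 * η - 1 := by linarith [hη.1]
  calc 1 - η + m / 2 ≤ 1 - η + (2 * η - 1) * m + (1 - η) * m := by nlinarith
    _ ≤ 1 - η + (2 * η - 1) * φ α + (1 - η) * (φ α + φ (-α) - 1) := by
      gcongr
      · exact sub_nonneg.2 hη.2
      · linarith
    _ = ccr φ α η := (ccr_eq_one_sub_add φ α η).symm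

lemma ccr_robustLoss_lt_of_half_le {φ : ℝ → ℝ} (hφ₁ : ∀ x, φ x ≤ 1) (hanti : Antitone φ)
    {γ m ε α η : ℝ} (hγ : 0 ≤ γ) (hm : 0 ≤ m) (hε : 0 < ε) (hη : η ∈ Set.Icc (1 / 2 : ℝ) 1)
    (heven : 1 ≤ φ α + φ (-α)) (hnear : |α| ≤ γ → 1 + m ≤ φ α + φ (-α))
    (hlt : ccr φ α η < 1 - η + min (m / 2) (ε / 2)) :
    ccr (robustLoss γ) α η < 1 - η + ε := by
  rcases le_or_gt |α| γ with hα | hα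
  · have hgap := one_sub_add_half_le_ccr hη hm (hφ₁ (-α)) (hnear hα)
    linarith [min_le_left (m / 2) (ε / 2)]
  rcases lt_abs.1 hα with hα | hα
  · rw [ccr_robustLoss_of_lt hγ hα]
    linarith
  · have hhalf := half_le_ccr hη.1 (hanti (by linarith)) heven
    rw [ccr_robustLoss_of_lt_neg hγ (lt_neg_of_lt_neg hα)]
    linarith [min_le_right (m / 2) (ε / 2)]

theorem calibrated_robustLoss_of_le_add_neg {φ : ℝ → ℝ} (hφ : ∀ x, φ x ∈ Set.Icc (0 : ℝ) 1)
    (hanti : Antitone φ) {A : Set ℝ} {a γ m : ℝ} (ha : a ∈ A) (hna : -a ∈ A) (hφa : φ a = 0)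
    (hγ : 0 ≤ γ) (hm : 0 < m) (heven : ∀ α ∈ A, 1 ≤ φ α + φ (-α))
    (hnear : ∀ α ∈ A, |α| ≤ γ → 1 + m ≤ φ α + φ (-α)) :
    Calibrated φ (robustLoss γ) A := by
  intro ε hε
  refine ⟨min (m / 2) (ε / 2), by positivity, fun η hη α hα hlt => ?_⟩
  have hφ₁ (x : ℝ) : φ x ≤ 1 := (hφ x).2
  have hstar := ccrStar_le_min hφ ha hna hφa hη
  suffices h : ccr (robustLoss γ) α η < min η (1 - η) + ε from
    h.trans_le (add_le_add_left (min_le_ccrStar_robustLoss hγ ⟨a, ha⟩ hη) ε)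
  rcases le_total (1 / 2) η with hη' | hη'
  · rw [min_eq_right (by linarith)] at hstar ⊢
    exact ccr_robustLoss_lt_of_half_le hφ₁ hanti hγ hm.le hε ⟨hη', hη.2⟩ (heven α hα) (hnear α hα)
      (by linarith)
  · rw [min_eq_left (by linarith)] at hstar ⊢
    rw [← ccr_neg_one_sub]
    have h := ccr_robustLoss_lt_of_half_le (α := -α) (η := 1 - η) hφ₁ hanti hγ hm.le hε
      ⟨by linarith, by linarith [hη.1]⟩
      (by simpa only [neg_neg, add_comm] using heven α hα)
      (by simpa only [neg_neg, abs_neg, add_comm] using hnear α hα)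
      (by rw [ccr_neg_one_sub]; linarith)
    simpa only [sub_sub_cancel] using h

lemma QuasiconcaveEven.add_neg_le {φ : ℝ → ℝ} (h : QuasiconcaveEven φ) (α : ℝ) :
    φ α + φ (-α) ≤ 2 * φ 0 := by
  have hmid := h α (-α) (1 / 2) (by norm_num) (by norm_num)
  have hzero : (1 / 2 : ℝ) * α + (1 - 1 / 2) * -α = 0 := by ring
  simpa only [hzero, neg_neg, neg_zero, add_comm (φ (-α)), min_self, ← two_mul] using hmid

lemma modSq_of_nonpos {x : ℝ} (hx : x ≤ 0) : modSq x = 1 := if_pos hx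

lemma modSq_of_nonneg {x : ℝ} (hx : 0 ≤ x) : modSq x = max 0 (1 - x) ^ 2 := by
  rcases hx.eq_or_lt with rfl | hx
  · norm_num [modSq]
  rw [modSq, if_neg hx.not_ge]
  split_ifs with h
  · rw [max_eq_right (sub_nonneg.2 h)]
  · rw [max_eq_left (by linarith), zero_pow two_ne_zero]

lemma modSq_of_mem_Icc {x : ℝ} (hx : x ∈ Set.Icc (0 : ℝ) 1) : modSq x = (1 - x) ^ 2 := by
  rw [modSq_of_nonneg hx.1, max_eq_right (sub_nonneg.2 hx.2)]

lemma modSq_of_one_le {x : ℝ} (hx : 1 ≤ x) : modSq x = 0 := by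
  rw [modSq_of_nonneg (zero_le_one.trans hx), max_eq_left (sub_nonpos.2 hx),
    zero_pow two_ne_zero]

lemma modSq_mem_Icc (x : ℝ) : modSq x ∈ Set.Icc (0 : ℝ) 1 := by
  unfold modSq
  constructor <;> split_ifs <;> nlinarith

lemma modSq_antitone : Antitone modSq := by
  intro x y hxy
  unfold modSq
  split_ifs <;> nlinarith

lemma modSq_pos {x : ℝ} (hx : x < 1) : 0 < modSq x := by
  rcases le_total x 0 with hx₀ | hx₀
  · rw [modSq_of_nonpos hx₀]
    exact one_pos
  · rw [modSq_of_mem_Icc ⟨hx₀, hx.le⟩]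
    exact pow_pos (sub_pos.2 hx) 2

lemma convexOn_modSq : ConvexOn ℝ (Set.Ici 0) modSq := by
  have hmax : ConvexOn ℝ (Set.Ici 0) fun x : ℝ => max 0 (1 - x) :=
    (convexOn_const 0 (convex_Ici 0)).sup
      ((convexOn_const 1 (convex_Ici 0)).sub (concaveOn_id (convex_Ici 0)))
  exact (hmax.pow (fun _ _ => le_max_left _ _) 2).congr fun x hx => (modSq_of_nonneg hx).symm

lemma two_mul_modSq_lt {x : ℝ} (hx : 0 < x) : 2 * modSq x < 1 + modSq (2 * x) := by
  unfold modSq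
  split_ifs <;> nlinarith

lemma half_lt_modSq {x : ℝ} (hx : x < 1 - 1 / √2) : 1 / 2 < modSq x := by
  have hsqrt : (1 / √2) ^ 2 = 1 / 2 := by rw [one_div_pow, Real.sq_sqrt zero_le_two]
  have hpos : 0 < 1 / √2 := by positivity
  rcases le_total x 0 with hx₀ | hx₀
  · rw [modSq_of_nonpos hx₀]
    exact one_half_lt_one
  · rw [modSq_of_mem_Icc ⟨hx₀, by linarith⟩, ← hsqrt]
    exact pow_lt_pow_left₀ (by linarith) hpos.le two_ne_zero

lemma min_le_modSq_sub_add_modSq_neg_sub (α β : ℝ) :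
    min (2 * modSq (-β)) (1 + modSq (|α| - β)) ≤ modSq (α - β) + modSq (-α - β) := by
  rcases le_total |α| (-β) with hα | hα
  · obtain ⟨hα₁, hα₂⟩ := abs_le.1 hα
    have hconv := convexOn_modSq.2 (x := α - β) (y := -α - β)
      (Set.mem_Ici.2 (by linarith)) (Set.mem_Ici.2 (by linarith))
      one_half_pos.le one_half_pos.le (add_halves 1)
    have hmid : (1 / 2 : ℝ) • (α - β) + (1 / 2 : ℝ) • (-α - β) = -β := by
      simp only [smul_eq_mul]
      ring
    rw [hmid, smul_eq_mul, smul_eq_mul] at hconv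
    exact (min_le_left _ _).trans (by linarith)
  · refine (min_le_right _ _).trans_eq ?_
    rcases abs_choice α with h | h
    · rw [h, modSq_of_nonpos (show -α - β ≤ 0 by linarith), add_comm]
    · rw [h, modSq_of_nonpos (show α - β ≤ 0 by linarith)]

theorem calibrated_modSq_sub {A : Set ℝ} {β γ : ℝ} (hA : 1 + β ∈ A) (hnA : -(1 + β) ∈ A)
    (hγ : 0 ≤ γ) (hγβ : γ < 1 + β) (hβ : -1 + 1 / √2 < β) :
    Calibrated (fun α => modSq (α - β)) (robustLoss γ) A := by
  have hhalf : 1 / 2 < modSq (-β) := half_lt_modSq (by linarith)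
  have hm : 0 < min (2 * modSq (-β) - 1) (modSq (γ - β)) :=
    lt_min (by linarith) (modSq_pos (by linarith))
  refine calibrated_robustLoss_of_le_add_neg (fun x => modSq_mem_Icc (x - β))
    (fun x y hxy => modSq_antitone (sub_le_sub_right hxy β)) hA hnA
    (modSq_of_one_le (by linarith)) hγ hm (fun α _ => ?_) (fun α _ hα => ?_)
  · refine le_trans (le_min ?_ ?_) (min_le_modSq_sub_add_modSq_neg_sub α β)
    · linarith
    · linarith [(modSq_mem_Icc (|α| - β)).1]
  · refine le_trans ?_ (min_le_modSq_sub_add_modSq_neg_sub α β)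
    rw [← min_add_add_left, add_sub_cancel]
    gcongr
    exact modSq_antitone (sub_le_sub_right hα β)

theorem not_quasiconcaveEven_modSq_sub {β : ℝ} (hβ : β < 0) :
    ¬ QuasiconcaveEven (fun α => modSq (α - β)) := by
  intro h
  have hle : modSq (β - β) + modSq (-β - β) ≤ 2 * modSq (0 - β) := h.add_neg_le β
  have hlt := two_mul_modSq_lt (neg_pos.2 hβ)
  rw [sub_self, modSq_of_nonpos le_rfl, zero_sub, show -β - β = 2 * -β by ring] at hle
  exact hle.not_gt hlt

theorem modSq_negative_shift_calibrated_general {A : Set ℝ} {β γ : ℝ}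
    (hA : 1 + β ∈ A) (hnA : -(1 + β) ∈ A) (hγ : 0 ≤ γ) (hγβ : γ < 1 + β)
    (hβ₀ : -1 + 1 / √2 < β) (hβ₁ : β < 0) :
    Calibrated (fun α => modSq (α - β)) (robustLoss γ) A ∧
    ¬ QuasiconcaveEven (fun α => modSq (α - β)) :=
  ⟨calibrated_modSq_sub hA hnA hγ hγβ hβ₀, not_quasiconcaveEven_modSq_sub hβ₁⟩

/-- For `0 < γ < 1/4` and `-1 + 1/√2 < β < 0`, the shifted modified squared loss is
`(φ_γ, [-1,1])`-calibrated even though it is not quasiconcave even. -/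
theorem modSq_negative_shift_calibrated
    (γ : ℝ) (hγ0 : 0 < γ) (hγ1 : γ < 1/4)
    (β : ℝ) (hβ0 : -1 + 1 / Real.sqrt 2 < β) (hβ1 : β < 0) :
    Calibrated (fun α => modSq (α - β)) (robustLoss γ) (Set.Icc (-1:ℝ) 1) ∧
    ¬ QuasiconcaveEven (fun α => modSq (α - β)) := by
  have hsqrt : 1 / 4 < 1 / √2 :=
    one_div_lt_one_div_of_lt (by positivity) ((Real.sqrt_lt' four_pos).2 (by norm_num))
  exact modSq_negative_shift_calibrated_general ⟨by linarith, by linarith⟩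
    ⟨by linarith, by linarith⟩ hγ0.le (by linarith) hβ0 hβ1
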